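/- arXiv:1807.06858 — 2 statements merged into one kernel-verified Lean document; each statement's English description precedes it below -/
import Mathlib

section
/- Meeting Time Theorem: for a reversible irreducible finite Markov chain P with nonnegative spectrum started from stationarity, for any t ≥ 0 and any deterministic sequence h_0, h_1, ..., h_t of states, the probability that X_s ≠ h_s for all 0 ≤ s ≤ t is at most (1 − 1/t_hit)^t, where t_hit = max_{y,x} E_y[τ_x]. -/
open Finset

variable {V : Type*}

noncomputable def pip [Fintype V] (pi f g : V → ℝ) : ℝ := ∑ x, pi x * f x * g x

noncomputable def secondEig [Fintype V] (pi : V → ℝ) (P : Matrix V V ℝ) : ℝ :=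
  sSup {r : ℝ | ∃ f : V → ℝ, pip pi f f = 1 ∧ (∑ x, pi x * f x) = 0 ∧ r = pip pi f (P.mulVec f)}

noncomputable def trelT [Fintype V] (pi : V → ℝ) (P : Matrix V V ℝ) : ℝ := 1 / (1 - secondEig pi P)

noncomputable def Dmat [Fintype V] [DecidableEq V] (h : V) : Matrix V V ℝ :=
  Matrix.diagonal fun y => if y = h then 0 else 1

noncomputable def opNorm [Fintype V] (pi : V → ℝ) (A : Matrix V V ℝ) : ℝ :=
  sSup {r : ℝ | ∃ f : V → ℝ, pip pi f f ≤ 1 ∧ r = Real.sqrt (pip pi (A.mulVec f) (A.mulVec f))}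

/-- probability, starting at `y`, that the chain avoids `x` during steps `0..t`
(i.e. `P_y(τ_x > t)`), written as a sum over length-`t` paths. -/
noncomputable def survProb [Fintype V] [DecidableEq V] (P : Matrix V V ℝ) (x y : V) (t : ℕ) : ℝ :=
  ∑ p : Fin (t+1) → V,
    if p 0 = y ∧ (∀ s, p s ≠ x) then ∏ s : Fin t, P (p s.castSucc) (p s.succ) else 0

/-- `Ehit P x y = E_y[τ_x]`, via `E[τ] = ∑_t P(τ > t)`. -/
noncomputable def Ehit [Fintype V] [DecidableEq V] (P : Matrix V V ℝ) (x y : V) : ℝ :=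
  ∑' t : ℕ, survProb P x y t

noncomputable def thit [Fintype V] [DecidableEq V] (P : Matrix V V ℝ) : ℝ :=
  ⨆ q : V × V, Ehit P q.1 q.2

/-- expected hitting time of `x` when the initial state has law `μ`. -/
noncomputable def EhitFrom [Fintype V] [DecidableEq V] (P : Matrix V V ℝ) (μ : V → ℝ) (x : V) : ℝ :=
  ∑' t : ℕ, ∑ y, μ y * survProb P x y t

/-- probability, starting from `pi`, that `X_s ≠ h s` for all `0 ≤ s ≤ t`. -/
noncomputable def avoidProb [Fintype V] [DecidableEq V] (pi : V → ℝ) (P : Matrix V V ℝ)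
    (t : ℕ) (h : Fin (t+1) → V) : ℝ :=
  ∑ p : Fin (t+1) → V,
    if ∀ s, p s ≠ h s then pi (p 0) * ∏ s : Fin t, P (p s.castSucc) (p s.succ) else 0

/-- expected number of visits to `x` strictly before hitting `A`, started at `x`. -/
noncomputable def visitsBeforeHit [Fintype V] [DecidableEq V] (P : Matrix V V ℝ)
    (A : Finset V) (x : V) : ℝ :=
  ∑' t : ℕ, ∑ p : Fin (t+1) → V,
    if p 0 = x ∧ p (Fin.last t) = x ∧ (∀ s, p s ∉ A) then
      ∏ s : Fin t, P (p s.castSucc) (p s.succ) else 0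

noncomputable def lazyP [Fintype V] [DecidableEq V] (G : SimpleGraph V) [DecidableRel G.Adj] :
    Matrix V V ℝ :=
  Matrix.of fun x y => if x = y then 1/2 else if G.Adj x y then 1/(2 * (G.degree x : ℝ)) else 0

noncomputable def lazyPi [Fintype V] [DecidableEq V] (G : SimpleGraph V) [DecidableRel G.Adj] :
    V → ℝ :=
  fun x => (G.degree x : ℝ) / ∑ v, (G.degree v : ℝ)

noncomputable def dminR [Fintype V] [Nonempty V] [DecidableEq V] (G : SimpleGraph V)
    [DecidableRel G.Adj] : ℝ :=
  Finset.univ.inf' Finset.univ_nonempty fun v => (G.degree v : ℝ)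

noncomputable def davgR [Fintype V] [DecidableEq V] (G : SimpleGraph V) [DecidableRel G.Adj] : ℝ :=
  (∑ v, (G.degree v : ℝ)) / Fintype.card V

noncomputable def Pstar [Fintype V] [DecidableEq V] (pi : V → ℝ) (γ : ℝ) : Matrix V V ℝ :=
  Matrix.of fun x y => (1 - γ) * (if x = y then 1 else 0) + γ * pi y

/-!
Write `D_x` for multiplication by the indicator of `{x}ᶜ` and `λ = 1 - 1 / t_hit`. The function
`u = E_·[τ_x]` vanishes at `x` and satisfies `P u = u - 1 ≤ λ u` elsewhere, so it is a positive
supersolution for the chain killed at `x`; by the Schur test, `⟨D_x f, P D_x f⟩ ≤ λ ⟨D_x f, D_x f⟩`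
in `ℓ²(π)`. The probability to be bounded is `⟨1, D_{h 0} P D_{h 1} P ⋯ P D_{h t} 1⟩`. As
`⟨f, P g⟩` is positive semidefinite, the Schur bound makes each factor `D_{h s} P` shrink the
seminorm `⟨f, P f⟩ ^ (1 / 2)` by `λ`, and the Cauchy–Schwarz inequality concludes.
-/

lemma summable_of_add_le_mul {f : ℕ → ℝ} (hf : ∀ t, 0 ≤ f t) {n : ℕ} {c : ℝ} (hc : c < 1)
    (h : ∀ t, f (t + n) ≤ c * f t) : Summable f := by
  refine summable_of_sum_range_le (c := (∑ t ∈ range n, f t) / (1 - c)) hf fun N => ?_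
  have hmono : ∑ t ∈ range N, f t ≤ ∑ t ∈ range (n + N), f t :=
    sum_le_sum_of_subset_of_nonneg (range_mono (Nat.le_add_left N n)) fun t _ _ => hf t
  have htail : ∑ t ∈ range N, f (n + t) ≤ c * ∑ t ∈ range N, f t := by
    rw [mul_sum]
    exact sum_le_sum fun t _ => add_comm t n ▸ h t
  rw [sum_range_add] at hmono
  rw [le_div_iff₀ (sub_pos.2 hc)]
  linarith

lemma bilinForm_apply_self_le_sq_mul {R M : Type*} [CommRing R] [LinearOrder R]
    [IsStrictOrderedRing R] [AddCommGroup M] [Module R M] {B : LinearMap.BilinForm R M}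
    (hB : B.IsPosSemidef) {c : R} {x y : M} (h : B x x ≤ c * B x y) :
    B x x ≤ c ^ 2 * B y y := by
  have hsub : 0 ≤ B x x - 2 * (c * B x y) + c ^ 2 * B y y :=
    calc 0 ≤ B (x - c • y) (x - c • y) := hB.nonneg _
      _ = B x x - 2 * (c * B x y) + c ^ 2 * B y y := by
        simp only [map_sub, map_smul, LinearMap.sub_apply, LinearMap.smul_apply, smul_eq_mul,
          hB.isSymm.eq y x]
        ring
  linarith

section Kernel

open scoped Matrix

/-- The **Schur test**, with the test function `u` factored out of the argument so that no division
by `u` occurs. -/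
lemma dotProduct_mulVec_mul_le [Fintype V] {A : Matrix V V ℝ} (hA : A.IsSymm)
    (hA0 : ∀ x y, 0 ≤ A x y) {u : V → ℝ} (hu : ∀ x, 0 ≤ u x) (k : V → ℝ) :
    (k * u) ⬝ᵥ A *ᵥ (k * u) ≤ (k ^ 2 * u) ⬝ᵥ A *ᵥ u := by
  set w : V → V → ℝ := fun x y => A x y * (u x * u y) with hw
  have hw0 : ∀ x y, 0 ≤ w x y := fun x y => mul_nonneg (hA0 x y) (mul_nonneg (hu x) (hu y))
  have hw_comm : ∀ x y, w x y = w y x := fun x y => by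
    simp only [hw, hA.apply x y, mul_comm (u x)]
  have hsymm : ∑ x, ∑ y, w x y * k y ^ 2 = ∑ x, ∑ y, w x y * k x ^ 2 := by
    rw [sum_comm]
    exact sum_congr rfl fun x _ => sum_congr rfl fun y _ => by rw [hw_comm]
  calc (k * u) ⬝ᵥ A *ᵥ (k * u)
      = ∑ x, ∑ y, w x y * (k x * k y) := by
        simp only [hw, dotProduct, Matrix.mulVec, mul_sum, Pi.mul_apply]
        exact sum_congr rfl fun x _ => sum_congr rfl fun y _ => by ring
    _ ≤ ∑ x, ∑ y, (w x y * k x ^ 2 + w x y * k y ^ 2) / 2 := by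
        refine sum_le_sum fun x _ => sum_le_sum fun y _ => ?_
        linarith [mul_nonneg (hw0 x y) (sq_nonneg (k x - k y))]
    _ = ∑ x, ∑ y, w x y * k x ^ 2 := by
        simp only [← sum_div, sum_add_distrib, hsymm, add_self_div_two]
    _ = (k ^ 2 * u) ⬝ᵥ A *ᵥ u := by
        simp only [hw, dotProduct, Matrix.mulVec, mul_sum, Pi.mul_apply, Pi.pow_apply]
        exact sum_congr rfl fun x _ => sum_congr rfl fun y _ => by ring

variable [Fintype V] [DecidableEq V] {P : Matrix V V ℝ} {pi : V → ℝ}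

lemma Dmat_mulVec_apply (x : V) (f : V → ℝ) (y : V) :
    (Dmat x *ᵥ f) y = if y = x then 0 else f y := by
  simp [Dmat, Matrix.mulVec_diagonal]

lemma pip_Dmat_mulVec_left (pi : V → ℝ) (x : V) (f g : V → ℝ) :
    pip pi (Dmat x *ᵥ f) g = pip pi f (Dmat x *ᵥ g) := by
  simp [pip, Dmat_mulVec_apply]

lemma pip_Dmat_mulVec_self (pi : V → ℝ) (x : V) (f : V → ℝ) :
    pip pi (Dmat x *ᵥ f) (Dmat x *ᵥ f) = pip pi (Dmat x *ᵥ f) f := by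
  refine sum_congr rfl fun y _ => ?_
  rw [Dmat_mulVec_apply]
  split_ifs <;> simp

lemma pip_Dmat_mulVec_one_le (hpi : ∀ x, 0 ≤ pi x) (x : V) :
    pip pi (Dmat x *ᵥ 1) 1 ≤ ∑ y, pi y := by
  refine sum_le_sum fun y _ => ?_
  rw [Dmat_mulVec_apply]
  split_ifs <;> simp [hpi y]

/-- The bilinear form `(f, g) ↦ ⟨f, P g⟩_π` of a kernel `P`, bundled so that the general theory of
positive semidefinite forms applies. Its matrix `diagonal pi * P` is the edge measure
`π(x) P(x, y)`. -/
noncomputable def transitionForm (pi : V → ℝ) (P : Matrix V V ℝ) :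
    LinearMap.BilinForm ℝ (V → ℝ) :=
  Matrix.toBilin' (Matrix.diagonal pi * P)

lemma transitionForm_apply (pi : V → ℝ) (P : Matrix V V ℝ) (f g : V → ℝ) :
    transitionForm pi P f g = pip pi f (P *ᵥ g) := by
  rw [transitionForm, Matrix.toBilin'_apply', ← Matrix.mulVec_mulVec]
  simp only [pip, dotProduct, Matrix.mulVec_diagonal, mul_left_comm, mul_assoc]

lemma isSymm_diagonal_mul (hrev : ∀ x y, pi x * P x y = pi y * P y x) :
    (Matrix.diagonal pi * P).IsSymm :=
  Matrix.IsSymm.ext fun x y => by simpa only [Matrix.diagonal_mul] using hrev y x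

lemma isPosSemidef_transitionForm (hrev : ∀ x y, pi x * P x y = pi y * P y x)
    (hpsd : ∀ f : V → ℝ, 0 ≤ pip pi f (P *ᵥ f)) : (transitionForm pi P).IsPosSemidef :=
  LinearMap.BilinForm.isPosSemidef_def.2
    ⟨Matrix.isSymm_toBilin'_iff_isSymm.2 (isSymm_diagonal_mul hrev),
      ⟨fun f => transitionForm_apply pi P f f ▸ hpsd f⟩⟩

lemma transitionForm_mul_le (hP : ∀ x y, 0 ≤ P x y) (hpi : ∀ x, 0 ≤ pi x)
    (hrev : ∀ x y, pi x * P x y = pi y * P y x) {u : V → ℝ} {c : ℝ} (hu : ∀ x, 0 ≤ u x)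
    (hsuper : ∀ x, u x ≠ 0 → (P *ᵥ u) x ≤ c * u x) (k : V → ℝ) :
    transitionForm pi P (k * u) (k * u) ≤ c * pip pi (k * u) (k * u) := by
  have hA0 : ∀ x y, 0 ≤ (Matrix.diagonal pi * P) x y := fun x y => by
    rw [Matrix.diagonal_mul]
    exact mul_nonneg (hpi x) (hP x y)
  calc transitionForm pi P (k * u) (k * u)
      ≤ transitionForm pi P (k ^ 2 * u) u := by
        simp only [transitionForm, Matrix.toBilin'_apply']
        exact dotProduct_mulVec_mul_le (isSymm_diagonal_mul hrev) hA0 hu k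
    _ = ∑ x, pi x * k x ^ 2 * (u x * (P *ᵥ u) x) := by
        simp only [transitionForm_apply, pip, Pi.mul_apply, Pi.pow_apply, mul_assoc]
    _ ≤ ∑ x, pi x * k x ^ 2 * (u x * (c * u x)) := by
        refine sum_le_sum fun x _ => mul_le_mul_of_nonneg_left ?_ (mul_nonneg (hpi x) (sq_nonneg _))
        rcases eq_or_ne (u x) 0 with hx | hx
        · simp [hx]
        · exact mul_le_mul_of_nonneg_left (hsuper x hx) (hu x)
    _ = c * pip pi (k * u) (k * u) := by
        simp only [pip, mul_sum, Pi.mul_apply]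
        exact sum_congr rfl fun x _ => by ring

/-- `avoidFrom P t h y` is the probability, starting from `y`, that `X_s ≠ h s` for all
`0 ≤ s ≤ t`. It is the common generalization of `survProb` (constant `h`) and the summands of
`avoidProb`, with the starting point last so that `avoidFrom P t h` is a vector. -/
noncomputable def avoidFrom (P : Matrix V V ℝ) (t : ℕ) (h : Fin (t + 1) → V) (y : V) : ℝ :=
  ∑ p : Fin (t + 1) → V,
    if p 0 = y ∧ ∀ s, p s ≠ h s then ∏ s : Fin t, P (p s.castSucc) (p s.succ) else 0

lemma avoidFrom_zero (P : Matrix V V ℝ) (h : Fin 1 → V) : avoidFrom P 0 h = Dmat (h 0) *ᵥ 1 := by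
  ext y
  rw [avoidFrom, ← (Equiv.funUnique (Fin 1) V).symm.sum_comp, Dmat_mulVec_apply]
  simp [ite_and, ite_not]

lemma avoidFrom_succ (P : Matrix V V ℝ) (t : ℕ) (h : Fin (t + 2) → V) :
    avoidFrom P (t + 1) h = Dmat (h 0) *ᵥ P *ᵥ avoidFrom P t (Fin.tail h) := by
  ext y
  have hcons : avoidFrom P (t + 1) h y = ∑ q : Fin (t + 1) → V,
      if y ≠ h 0 ∧ ∀ s, q s ≠ Fin.tail h s then
        P y (q 0) * ∏ s : Fin t, P (q s.castSucc) (q s.succ) else 0 := by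
    rw [avoidFrom, ← (Fin.consEquiv fun _ => V).sum_comp, Fintype.sum_prod_type_right]
    simp [Fin.consEquiv, Fin.forall_fin_succ, Fin.prod_univ_succ, Fin.tail, ite_and]
  rw [hcons, Dmat_mulVec_apply]
  split_ifs with hy
  · simp [hy]
  · simp only [Matrix.mulVec, dotProduct, avoidFrom, mul_sum]
    rw [sum_comm]
    simp [hy, ite_and]

lemma avoidProb_eq_pip (pi : V → ℝ) (P : Matrix V V ℝ) (t : ℕ) (h : Fin (t + 1) → V) :
    avoidProb pi P t h = pip pi 1 (avoidFrom P t h) := by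
  simp only [avoidProb, pip, avoidFrom, mul_sum]
  rw [sum_comm]
  simp [ite_and]

lemma avoidProb_zero (pi : V → ℝ) (P : Matrix V V ℝ) (h : Fin 1 → V) :
    avoidProb pi P 0 h = pip pi (Dmat (h 0) *ᵥ 1) 1 := by
  rw [avoidProb_eq_pip, avoidFrom_zero, pip_Dmat_mulVec_left]

lemma avoidProb_succ (pi : V → ℝ) (P : Matrix V V ℝ) (t : ℕ) (h : Fin (t + 2) → V) :
    avoidProb pi P (t + 1) h =
      transitionForm pi P (Dmat (h 0) *ᵥ 1) (avoidFrom P t (Fin.tail h)) := by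
  rw [avoidProb_eq_pip, avoidFrom_succ, transitionForm_apply, pip_Dmat_mulVec_left]

lemma survProb_eq_avoidFrom (P : Matrix V V ℝ) (x y : V) (t : ℕ) :
    survProb P x y t = avoidFrom P t (fun _ => x) y :=
  rfl

lemma survProb_zero (P : Matrix V V ℝ) (x y : V) :
    survProb P x y 0 = if y = x then 0 else 1 := by
  rw [survProb_eq_avoidFrom, avoidFrom_zero, Dmat_mulVec_apply, Pi.one_apply]

lemma survProb_succ (P : Matrix V V ℝ) (x y : V) (t : ℕ) :
    survProb P x y (t + 1) = if y = x then 0 else ∑ z, P y z * survProb P x z t := by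
  rw [survProb_eq_avoidFrom, avoidFrom_succ, Dmat_mulVec_apply]
  rfl

lemma survProb_self (P : Matrix V V ℝ) (x : V) (t : ℕ) : survProb P x x t = 0 := by
  cases t <;> simp [survProb_zero, survProb_succ]

lemma survProb_nonneg (hP : ∀ x y, 0 ≤ P x y) (x y : V) (t : ℕ) : 0 ≤ survProb P x y t :=
  sum_nonneg fun _ _ => ite_nonneg (prod_nonneg fun _ _ => hP _ _) le_rfl

lemma survProb_add_le_mul (hP : ∀ x y, 0 ≤ P x y) {x : V} {n : ℕ} {c : ℝ}
    (hc : ∀ y, survProb P x y n ≤ c * survProb P x y 0) (t : ℕ) (y : V) :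
    survProb P x y (t + n) ≤ c * survProb P x y t := by
  induction t generalizing y with
  | zero => simpa using hc y
  | succ t ih =>
    rw [Nat.add_right_comm, survProb_succ, survProb_succ, mul_ite, mul_zero, mul_sum]
    split_ifs
    · rfl
    · refine sum_le_sum fun z _ => ?_
      rw [mul_left_comm]
      exact mul_le_mul_of_nonneg_left (ih z) (hP y z)

lemma survProb_add_pow_apply_le_one (hP : P ∈ Matrix.rowStochastic ℝ V) (x y : V) (t : ℕ) :
    survProb P x y t + (P ^ t) y x ≤ 1 := by
  induction t generalizing y with
  | zero =>
    rw [survProb_zero, pow_zero, Matrix.one_apply]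
    split_ifs <;> norm_num
  | succ t ih =>
    rw [survProb_succ]
    split_ifs
    · rw [zero_add]
      exact Matrix.le_one_of_mem_rowStochastic (pow_mem hP _)
    · rw [pow_succ', Matrix.mul_apply, ← sum_add_distrib,
        ← Matrix.sum_row_of_mem_rowStochastic hP y]
      refine sum_le_sum fun z _ => ?_
      rw [← mul_add]
      exact mul_le_of_le_one_right (hP.1 y z) (ih z)

lemma survProb_le_one (hP : P ∈ Matrix.rowStochastic ℝ V) (x y : V) (t : ℕ) :
    survProb P x y t ≤ 1 :=
  (le_add_of_nonneg_right ((pow_mem hP t).1 y x)).trans (survProb_add_pow_apply_le_one hP x y t)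

lemma survProb_antitone (hP : P ∈ Matrix.rowStochastic ℝ V) (x y : V) :
    Antitone (survProb P x y) := by
  have hone : ∀ z, survProb P x z 1 ≤ 1 * survProb P x z 0 := fun z => by
    rw [one_mul, survProb_zero]
    split_ifs with hz
    · rw [hz, survProb_self]
    · exact survProb_le_one hP x z 1
  exact antitone_nat_of_succ_le fun t => one_mul (survProb P x y t) ▸
    survProb_add_le_mul hP.1 hone t y

lemma exists_survProb_le_mul (hP : P ∈ Matrix.rowStochastic ℝ V) {x : V}
    (hx : ∀ y, ∃ t : ℕ, 0 < (P ^ t) y x) :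
    ∃ n : ℕ, ∃ c < 1, ∀ y, survProb P x y n ≤ c * survProb P x y 0 := by
  choose T hT using hx
  set n := univ.sup T
  have hlt : ∀ y, survProb P x y n < 1 := fun y =>
    calc survProb P x y n ≤ survProb P x y (T y) :=
          survProb_antitone hP x y (le_sup (mem_univ y))
      _ < survProb P x y (T y) + (P ^ T y) y x := lt_add_of_pos_right _ (hT y)
      _ ≤ 1 := survProb_add_pow_apply_le_one hP x y (T y)
  have hne : (univ : Finset V).Nonempty := ⟨x, mem_univ x⟩
  refine ⟨n, univ.sup' hne fun y => survProb P x y n, (sup'_lt_iff hne).2 fun y _ => hlt y,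
    fun y => ?_⟩
  rw [survProb_zero]
  split_ifs with hy
  · rw [hy, survProb_self, mul_zero]
  · rw [mul_one]
    exact le_sup' (fun y => survProb P x y n) (mem_univ y)

lemma summable_survProb (hP : P ∈ Matrix.rowStochastic ℝ V) {x : V}
    (hx : ∀ y, ∃ t : ℕ, 0 < (P ^ t) y x) (y : V) : Summable (survProb P x y) :=
  let ⟨_, _, hc, h⟩ := exists_survProb_le_mul hP hx
  summable_of_add_le_mul (survProb_nonneg hP.1 x y) hc fun t => survProb_add_le_mul hP.1 h t y

lemma Ehit_self (P : Matrix V V ℝ) (x : V) : Ehit P x x = 0 := by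
  simp [Ehit, survProb_self]

lemma Ehit_nonneg (hP : ∀ x y, 0 ≤ P x y) (x y : V) : 0 ≤ Ehit P x y :=
  tsum_nonneg (survProb_nonneg hP x y)

lemma one_le_Ehit (hP : ∀ x y, 0 ≤ P x y) {x y : V} (hfin : Summable (survProb P x y))
    (hy : y ≠ x) : 1 ≤ Ehit P x y :=
  calc 1 = survProb P x y 0 := by rw [survProb_zero, if_neg hy]
    _ ≤ Ehit P x y := hfin.le_tsum 0 fun t _ => survProb_nonneg hP x y t

lemma Ehit_eq_one_add {x : V} (hfin : ∀ z, Summable (survProb P x z)) {y : V} (hy : y ≠ x) :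
    Ehit P x y = 1 + (P *ᵥ Ehit P x) y := by
  simp only [Ehit, Matrix.mulVec, dotProduct]
  rw [(hfin y).tsum_eq_zero_add, survProb_zero, if_neg hy]
  simp only [survProb_succ, if_neg hy]
  rw [Summable.tsum_finsetSum fun z _ => (hfin z).mul_left _]
  simp only [tsum_mul_left]

lemma Ehit_le_thit (P : Matrix V V ℝ) (x y : V) : Ehit P x y ≤ thit P :=
  le_ciSup (f := fun q : V × V => Ehit P q.1 q.2) (Set.finite_range _).bddAbove (x, y)

lemma thit_of_subsingleton [Subsingleton V] (P : Matrix V V ℝ) : thit P = 0 := by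
  have hzero : ∀ q : V × V, Ehit P q.1 q.2 = 0 := fun q => by
    rw [Subsingleton.elim q.2 q.1, Ehit_self]
  simp [thit, hzero]

lemma one_sub_one_div_thit_nonneg (hP : ∀ x y, 0 ≤ P x y)
    (hfin : ∀ x y, Summable (survProb P x y)) : 0 ≤ 1 - 1 / thit P := by
  rcases subsingleton_or_nontrivial V with _ | _
  · simp [thit_of_subsingleton]
  · obtain ⟨x, y, hxy⟩ := exists_pair_ne V
    have hone : 1 ≤ thit P := (one_le_Ehit hP (hfin y x) hxy).trans (Ehit_le_thit P y x)
    exact sub_nonneg.2 (div_le_one_of_le₀ hone (zero_le_one.trans hone))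

lemma mulVec_Ehit_le (hP : ∀ x y, 0 ≤ P x y) {x : V} (hfin : ∀ z, Summable (survProb P x z))
    {y : V} (hy : y ≠ x) : (P *ᵥ Ehit P x) y ≤ (1 - 1 / thit P) * Ehit P x y := by
  have hratio : 1 / thit P * Ehit P x y ≤ 1 := by
    rw [one_div_mul_eq_div]
    exact div_le_one_of_le₀ (Ehit_le_thit P x y)
      ((Ehit_nonneg hP x y).trans (Ehit_le_thit P x y))
  linarith [Ehit_eq_one_add hfin hy]

lemma transitionForm_self_le_of_apply_eq_zero (hP : ∀ x y, 0 ≤ P x y) (hpi : ∀ x, 0 ≤ pi x)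
    (hrev : ∀ x y, pi x * P x y = pi y * P y x) {x : V}
    (hfin : ∀ z, Summable (survProb P x z)) {f : V → ℝ} (hf : f x = 0) :
    transitionForm pi P f f ≤ (1 - 1 / thit P) * pip pi f f := by
  have hfu : f / Ehit P x * Ehit P x = f := by
    ext y
    rcases eq_or_ne y x with rfl | hy
    · simp [hf]
    · exact div_mul_cancel₀ _ (zero_lt_one.trans_le (one_le_Ehit hP (hfin y) hy)).ne'
  have hsuper : ∀ y, Ehit P x y ≠ 0 → (P *ᵥ Ehit P x) y ≤ (1 - 1 / thit P) * Ehit P x y :=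
    fun y hy => mulVec_Ehit_le hP hfin fun hyx => hy (hyx ▸ Ehit_self P x)
  have hschur := transitionForm_mul_le hP hpi hrev (Ehit_nonneg hP x) hsuper (f / Ehit P x)
  rwa [hfu] at hschur

lemma transitionForm_Dmat_mulVec_le (hP : ∀ x y, 0 ≤ P x y) (hpi : ∀ x, 0 ≤ pi x)
    (hrev : ∀ x y, pi x * P x y = pi y * P y x) {x : V}
    (hfin : ∀ z, Summable (survProb P x z)) (f : V → ℝ) :
    transitionForm pi P (Dmat x *ᵥ f) (Dmat x *ᵥ f) ≤
      (1 - 1 / thit P) * pip pi (Dmat x *ᵥ f) f := by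
  rw [← pip_Dmat_mulVec_self]
  exact transitionForm_self_le_of_apply_eq_zero hP hpi hrev hfin (by simp [Dmat_mulVec_apply])

lemma transitionForm_Dmat_mulVec_one_le (hP : ∀ x y, 0 ≤ P x y) (hpi : ∀ x, 0 ≤ pi x)
    (hrev : ∀ x y, pi x * P x y = pi y * P y x) (hfin : ∀ x y, Summable (survProb P x y))
    (x : V) :
    transitionForm pi P (Dmat x *ᵥ 1) (Dmat x *ᵥ 1) ≤ (1 - 1 / thit P) * ∑ y, pi y :=
  (transitionForm_Dmat_mulVec_le hP hpi hrev (hfin x) 1).trans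
    (mul_le_mul_of_nonneg_left (pip_Dmat_mulVec_one_le hpi x)
      (one_sub_one_div_thit_nonneg hP hfin))

lemma transitionForm_Dmat_mulVec_mulVec_le (hP : ∀ x y, 0 ≤ P x y) (hpi : ∀ x, 0 ≤ pi x)
    (hrev : ∀ x y, pi x * P x y = pi y * P y x) (hpsd : ∀ f : V → ℝ, 0 ≤ pip pi f (P *ᵥ f))
    {x : V} (hfin : ∀ z, Summable (survProb P x z)) (f : V → ℝ) :
    transitionForm pi P (Dmat x *ᵥ P *ᵥ f) (Dmat x *ᵥ P *ᵥ f) ≤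
      (1 - 1 / thit P) ^ 2 * transitionForm pi P f f := by
  refine bilinForm_apply_self_le_sq_mul (isPosSemidef_transitionForm hrev hpsd) ?_
  rw [transitionForm_apply pi P _ f]
  exact transitionForm_Dmat_mulVec_le hP hpi hrev hfin (P *ᵥ f)

lemma transitionForm_avoidFrom_le (hP : ∀ x y, 0 ≤ P x y) (hpi : ∀ x, 0 ≤ pi x)
    (hrev : ∀ x y, pi x * P x y = pi y * P y x) (hpsd : ∀ f : V → ℝ, 0 ≤ pip pi f (P *ᵥ f))
    (hfin : ∀ x y, Summable (survProb P x y)) (t : ℕ) (h : Fin (t + 1) → V) :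
    transitionForm pi P (avoidFrom P t h) (avoidFrom P t h) ≤
      (1 - 1 / thit P) ^ (2 * t + 1) * ∑ x, pi x := by
  induction t with
  | zero =>
    rw [avoidFrom_zero, mul_zero, zero_add, pow_one]
    exact transitionForm_Dmat_mulVec_one_le hP hpi hrev hfin (h 0)
  | succ t ih =>
    set g := avoidFrom P t (Fin.tail h)
    rw [avoidFrom_succ]
    calc transitionForm pi P (Dmat (h 0) *ᵥ P *ᵥ g) (Dmat (h 0) *ᵥ P *ᵥ g)
        ≤ (1 - 1 / thit P) ^ 2 * transitionForm pi P g g :=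
          transitionForm_Dmat_mulVec_mulVec_le hP hpi hrev hpsd (hfin (h 0)) g
      _ ≤ (1 - 1 / thit P) ^ 2 * ((1 - 1 / thit P) ^ (2 * t + 1) * ∑ x, pi x) :=
          mul_le_mul_of_nonneg_left (ih _) (sq_nonneg _)
      _ = (1 - 1 / thit P) ^ (2 * (t + 1) + 1) * ∑ x, pi x := by ring

end Kernel

theorem stmt11_general [Fintype V] [DecidableEq V] (P : Matrix V V ℝ) (pi : V → ℝ)
    (hP : ∀ x y, 0 ≤ P x y) (hpi : ∀ x, 0 ≤ pi x)
    (hrev : ∀ x y, pi x * P x y = pi y * P y x)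
    (hpsd : ∀ f : V → ℝ, 0 ≤ pip pi f (P.mulVec f))
    (hfin : ∀ x y, Summable (survProb P x y)) (t : ℕ) (h : Fin (t + 1) → V) :
    avoidProb pi P t h ≤ (1 - 1 / thit P) ^ t * ∑ x, pi x := by
  have hlam := one_sub_one_div_thit_nonneg hP hfin
  have hmass : 0 ≤ ∑ x, pi x := sum_nonneg fun x _ => hpi x
  cases t with
  | zero =>
    rw [avoidProb_zero, pow_zero, one_mul]
    exact pip_Dmat_mulVec_one_le hpi (h 0)
  | succ t =>
    have hB := isPosSemidef_transitionForm hrev hpsd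
    set d := (Dmat (h 0)).mulVec 1
    set g := avoidFrom P t (Fin.tail h)
    rw [avoidProb_succ]
    refine le_of_sq_le_sq ?_ (mul_nonneg (pow_nonneg hlam _) hmass)
    calc transitionForm pi P d g ^ 2
        ≤ transitionForm pi P d d * transitionForm pi P g g :=
          LinearMap.BilinForm.apply_sq_le_of_symm _ hB.nonneg
            (LinearMap.BilinForm.isSymm_iff.1 hB.isSymm) d g
      _ ≤ ((1 - 1 / thit P) * ∑ x, pi x) * ((1 - 1 / thit P) ^ (2 * t + 1) * ∑ x, pi x) :=
          mul_le_mul (transitionForm_Dmat_mulVec_one_le hP hpi hrev hfin (h 0))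
            (transitionForm_avoidFrom_le hP hpi hrev hpsd hfin t _) (hB.nonneg g)
            (mul_nonneg hlam hmass)
      _ = ((1 - 1 / thit P) ^ (t + 1) * ∑ x, pi x) ^ 2 := by ring

theorem stmt11 [Fintype V] [DecidableEq V] (P : Matrix V V ℝ) (pi : V → ℝ)
    (hP : ∀ x y, 0 ≤ P x y) (hrow : ∀ x, ∑ y, P x y = 1)
    (hpi : ∀ x, 0 < pi x) (hpisum : ∑ x, pi x = 1)
    (hrev : ∀ x y, pi x * P x y = pi y * P y x)
    (hirr : ∀ x y, ∃ t : ℕ, 0 < (P ^ t) x y)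
    (hpsd : ∀ f : V → ℝ, 0 ≤ pip pi f (P.mulVec f)) :
    ∀ (t : ℕ) (h : Fin (t+1) → V),
      avoidProb pi P t h ≤ (1 - 1 / thit P) ^ t := by
  intro t h
  have hfin : ∀ x y, Summable (survProb P x y) := fun x =>
    summable_survProb (Matrix.mem_rowStochastic_iff_sum.2 ⟨hP, hrow⟩) fun y => hirr y x
  simpa only [hpisum, mul_one] using
    stmt11_general P pi hP (fun x => (hpi x).le) hrev hpsd hfin t h
end

section
/- For lazy random walk on a finite connected graph, for any vertex x and t ≥ 0: P^t(x,x) − π(x) ≤ (10 d_x/d_min) · min(1/√(t+1), √(t_rel+1)/(t+1)). -/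
open Finset

variable {V : Type*}

/-!
With `f_k y := P^k(y,x) - π(x)` and `q_k := f_k x`, the numbers `π(x) q_k` are the autocovariances
of a single mean-zero observable. For a lazy reversible chain these are nonnegative, decreasing and
convex in `k`, so the drop `π(x) (q_k - q_{k+1})` dominates the Dirichlet energy of `f_k`, which
occurs as the drop at the later time `2k`.

The energy is bounded below in terms of `q_k`: by reversibility the superlevel set
`{f_k > q_k / 2}` has at most `2 d_x / (d_min q_k)` vertices, while `f_k` falls by `q_k / 2` on the
way from `x` to its complement. If the nearest vertex outside is at distance `r ≥ 2`, no vertex is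
adjacent to more than three vertices of a geodesic, so `r d_min` is at most six times the size of
the set; if it is adjacent to `x`, the edges leaving the set from `x` carry enough energy. Hence
`q_k³ ≤ (10 d_x / d_min)² (q_k - q_{k+1})`. The spectral gap gives
`q_k ≤ (t_rel + 1) (q_k - q_{k+1})`, and the geometric mean of the two inequalities is quadratic
in `q_k`. The cubic and the quadratic inequality integrate to the two rates.
-/

open Matrix

section Decay

theorem succ_mul_pow_le_of_pow_le_mul_sub {q : ℕ → ℝ} {C : ℝ} {p : ℕ} (hq : ∀ k, 0 ≤ q k)
    (hC : 0 < C) (hdecay : ∀ k, q k ^ (p + 2) ≤ C * (q k - q (k + 1))) (t : ℕ) :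
    (t + 1) * q t ^ (p + 1) ≤ C := by
  induction t with
  | zero =>
    rcases (hq 0).eq_or_lt with h0 | h0
    · simpa [← h0] using hC.le
    · refine le_of_mul_le_mul_right ?_ h0
      calc ((0 : ℕ) + 1) * q 0 ^ (p + 1) * q 0 = q 0 ^ (p + 2) := by push_cast; ring
        _ ≤ C * (q 0 - q 1) := hdecay 0
        _ ≤ C * q 0 := by gcongr; linarith [hq 1]
  | succ t ih =>
    rcases (hq (t + 1)).eq_or_lt with hb | hb
    · simpa [← hb] using hC.le
    have hstep : q t ^ (p + 2) ≤ C * (q t - q (t + 1)) := hdecay t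
    set a := q t
    set b := q (t + 1)
    have hba : b ≤ a :=
      sub_nonneg.1 (nonneg_of_mul_nonneg_right ((pow_nonneg (hq t) _).trans hstep) hC)
    have ha : 0 < a := hb.trans_le hba
    have hpow : b ^ (p + 1) ≤ a ^ p * b := by rw [pow_succ]; gcongr
    have hprod : a ^ (p + 1) * b ^ (p + 1) ≤ C * (a ^ (p + 1) - b ^ (p + 1)) := by
      calc a ^ (p + 1) * b ^ (p + 1) ≤ a ^ (p + 1) * a ^ (p + 1) := by gcongr
        _ = a ^ p * a ^ (p + 2) := by ring
        _ ≤ a ^ p * (C * (a - b)) := by gcongr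
        _ = C * (a ^ (p + 1) - a ^ p * b) := by ring
        _ ≤ C * (a ^ (p + 1) - b ^ (p + 1)) := by gcongr
    refine le_of_mul_le_mul_right ?_ (pow_pos ha (p + 1))
    calc ((t + 1 : ℕ) + 1) * b ^ (p + 1) * a ^ (p + 1)
        = (t + 1) * a ^ (p + 1) * b ^ (p + 1) + a ^ (p + 1) * b ^ (p + 1) := by push_cast; ring
      _ ≤ C * b ^ (p + 1) + C * (a ^ (p + 1) - b ^ (p + 1)) := by gcongr
      _ = C * a ^ (p + 1) := by ring

theorem le_mul_min_of_decay {q : ℕ → ℝ} {K T : ℝ} (hq : ∀ k, 0 ≤ q k) (hK : 0 < K) (hT : 0 < T)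
    (hcubic : ∀ k, q k ^ 3 ≤ K ^ 2 * (q k - q (k + 1)))
    (hlinear : ∀ k, q k ≤ T * (q k - q (k + 1))) (t : ℕ) :
    q t ≤ K * min (1 / √(t + 1)) (√T / (t + 1)) := by
  have ht : (0 : ℝ) < t + 1 := by positivity
  have hquadratic : ∀ k, q k ^ 2 ≤ K * √T * (q k - q (k + 1)) := fun k => by
    have hdrop : 0 ≤ q k - q (k + 1) := nonneg_of_mul_nonneg_right ((hq k).trans (hlinear k)) hT
    refine le_of_sq_le_sq ?_ (by positivity)
    calc (q k ^ 2) ^ 2 = q k ^ 3 * q k := by ring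
      _ ≤ K ^ 2 * (q k - q (k + 1)) * (T * (q k - q (k + 1))) :=
        mul_le_mul (hcubic k) (hlinear k) (hq k) (by positivity)
      _ = (K * √T * (q k - q (k + 1))) ^ 2 := by rw [mul_pow, mul_pow, Real.sq_sqrt hT.le]; ring
  rw [mul_min_of_nonneg _ _ hK.le, mul_one_div, ← mul_div_assoc]
  refine le_min ?_ ?_
  · rw [le_div_iff₀ (Real.sqrt_pos.2 ht)]
    refine le_of_sq_le_sq ?_ hK.le
    rw [mul_pow, Real.sq_sqrt ht.le, mul_comm]
    exact succ_mul_pow_le_of_pow_le_mul_sub hq (by positivity) hcubic t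
  · rw [le_div_iff₀ ht, mul_comm]
    simpa using succ_mul_pow_le_of_pow_le_mul_sub (p := 0) hq (by positivity) hquadratic t

end Decay

section InnerProduct

variable [Fintype V]

theorem pip_one_left (π f : V → ℝ) : pip π 1 f = ∑ x, π x * f x := by
  simp only [pip, Pi.one_apply, mul_one]

theorem pip_sub_left (π f g h : V → ℝ) : pip π (f - g) h = pip π f h - pip π g h := by
  simp only [pip, Pi.sub_apply, mul_sub, sub_mul, sum_sub_distrib]

theorem pip_sub_right (π f g h : V → ℝ) : pip π f (g - h) = pip π f g - pip π f h := by
  simp only [pip, Pi.sub_apply, mul_sub, sum_sub_distrib]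

theorem pip_smul_smul (π f g : V → ℝ) (a : ℝ) : pip π (a • f) (a • g) = a ^ 2 * pip π f g := by
  simp only [pip, Pi.smul_apply, smul_eq_mul, mul_sum]
  exact sum_congr rfl fun _ _ => by ring

theorem pip_self_nonneg {π : V → ℝ} (hπ : ∀ x, 0 ≤ π x) (f : V → ℝ) : 0 ≤ pip π f f :=
  sum_nonneg fun x _ => by
    rw [mul_assoc]
    exact mul_nonneg (hπ x) (mul_self_nonneg _)

theorem two_mul_pip_self_le_of_sq_sub_le {π f : V → ℝ} {B : ℝ} (hπ : ∀ x, 0 ≤ π x)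
    (hsum : ∑ x, π x = 1) (hf : ∑ x, π x * f x = 0) (hB : ∀ x y, (f x - f y) ^ 2 ≤ B) :
    2 * pip π f f ≤ B := by
  have hvar : ∑ x, ∑ y, π x * π y * (f x - f y) ^ 2 = 2 * pip π f f := by
    calc ∑ x, ∑ y, π x * π y * (f x - f y) ^ 2
        = ∑ x, ∑ y, (π x * f x * f x * π y + π x * (π y * f y * f y)
            - 2 * (π x * f x) * (π y * f y)) :=
          sum_congr rfl fun _ _ => sum_congr rfl fun _ _ => by ring
      _ = 2 * pip π f f := by
          simp only [sum_add_distrib, sum_sub_distrib, ← mul_sum, ← sum_mul, hsum, hf, pip]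
          ring
  calc 2 * pip π f f = ∑ x, ∑ y, π x * π y * (f x - f y) ^ 2 := hvar.symm
    _ ≤ ∑ x, ∑ y, π x * π y * B := by
        gcongr with x _ y _
        · exact mul_nonneg (hπ x) (hπ y)
        · exact hB x y
    _ = B := by simp only [← sum_mul, ← mul_sum, hsum, one_mul, mul_one]

end InnerProduct

section ReversibleChain

variable [Fintype V]

/-- The Dirichlet form `⟨f, (I - P) f⟩_π`. For a reversible chain it is
`½ ∑ x y, π x * P x y * (f x - f y) ^ 2`, see `IsReversibleChain.dirichletForm_eq`. -/
noncomputable def dirichletForm (π : V → ℝ) (P : Matrix V V ℝ) (f : V → ℝ) : ℝ :=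
  pip π f f - pip π f (P *ᵥ f)

/-- Detailed balance: the stationary flow from `x` to `y` equals the one from `y` to `x`. -/
def DetailedBalance (π : V → ℝ) (P : Matrix V V ℝ) : Prop :=
  ∀ x y, π x * P x y = π y * P y x

theorem secondEig_lt_one_of_poincare {π : V → ℝ} {P : Matrix V V ℝ} {C : ℝ} (hC : 0 < C)
    (hpoincare : ∀ f : V → ℝ, ∑ x, π x * f x = 0 → pip π f f ≤ C * dirichletForm π P f) :
    secondEig π P < 1 := by
  suffices h : secondEig π P ≤ max 0 (1 - C⁻¹) from
    h.trans_lt (max_lt one_pos (sub_lt_self 1 (inv_pos.2 hC)))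
  refine Real.sSup_le ?_ (le_max_left _ _)
  rintro r ⟨f, hnorm, hmean, rfl⟩
  have hgap : 1 ≤ C * (1 - pip π f (P *ᵥ f)) := by
    simpa only [dirichletForm, hnorm] using hpoincare f hmean
  have : C⁻¹ ≤ 1 - pip π f (P *ᵥ f) := (inv_le_iff_one_le_mul₀' hC).2 hgap
  exact le_max_of_le_right (by linarith)

namespace DetailedBalance

variable {π : V → ℝ} {P : Matrix V V ℝ}

theorem pip_mulVec_comm (h : DetailedBalance π P) (f g : V → ℝ) :
    pip π f (P *ᵥ g) = pip π (P *ᵥ f) g := by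
  simp only [pip, mulVec, dotProduct, mul_sum, sum_mul]
  rw [sum_comm]
  exact sum_congr rfl fun x _ => sum_congr rfl fun y _ => by
    linear_combination f y * g x * h y x

variable [DecidableEq V]

theorem iff_semiconjBy_diagonal :
    DetailedBalance π P ↔ SemiconjBy (diagonal π) P Pᵀ := by
  simp only [DetailedBalance, SemiconjBy, ← Matrix.ext_iff, diagonal_mul, mul_diagonal,
    transpose_apply, mul_comm (π _) (P _ _)]

theorem pow (h : DetailedBalance π P) (k : ℕ) : DetailedBalance π (P ^ k) := by
  rw [iff_semiconjBy_diagonal, transpose_pow]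
  exact (iff_semiconjBy_diagonal.1 h).pow_right k

end DetailedBalance

variable [DecidableEq V]

/-- `P` is a Markov kernel, reversible with respect to the probability vector `π`. -/
structure IsReversibleChain (π : V → ℝ) (P : Matrix V V ℝ) : Prop where
  stochastic : P ∈ rowStochastic ℝ V
  balance : DetailedBalance π P
  nonneg : ∀ x, 0 ≤ π x
  sum_eq_one : ∑ x, π x = 1

/-- The stationary autocovariance `E_π[f(X₀) f(X_k)]` of a mean-zero observable `f`. -/
noncomputable def autocov (π : V → ℝ) (P : Matrix V V ℝ) (f : V → ℝ) (k : ℕ) : ℝ :=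
  pip π f (P ^ k *ᵥ f)

/-- The indicator of `x` recentred by its stationary mean, `1_{x} - π x`. Its autocovariance is
the deviation of the return probability of `x` from `π x`, scaled by `π x`. -/
def pointDeviation (π : V → ℝ) (x : V) : V → ℝ :=
  Pi.single x 1 - fun _ => π x

theorem pip_pointDeviation (π g : V → ℝ) (x : V) :
    pip π (pointDeviation π x) g = π x * g x - π x * ∑ y, π y * g y := by
  simp only [pip, pointDeviation, Pi.sub_apply, mul_sub, sub_mul, sum_sub_distrib,
    Pi.single_apply, mul_ite, ite_mul, mul_one, mul_zero, zero_mul, sum_ite_eq', mem_univ, if_true]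
  rw [mul_sum]
  exact congrArg _ (sum_congr rfl fun _ _ => by ring)

namespace IsReversibleChain

variable {π f : V → ℝ} {P : Matrix V V ℝ}

theorem pow (h : IsReversibleChain π P) (k : ℕ) : IsReversibleChain π (P ^ k) :=
  ⟨pow_mem h.stochastic k, h.balance.pow k, h.nonneg, h.sum_eq_one⟩

theorem flow_nonneg (h : IsReversibleChain π P) (x y : V) : 0 ≤ π x * P x y :=
  mul_nonneg (h.nonneg x) (nonneg_of_mem_rowStochastic h.stochastic)

theorem sum_mul_mulVec (h : IsReversibleChain π P) (f : V → ℝ) :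
    ∑ x, π x * (P *ᵥ f) x = ∑ x, π x * f x := by
  rw [← pip_one_left, h.balance.pip_mulVec_comm, one_vecMul_of_mem_rowStochastic h.stochastic,
    pip_one_left]

theorem sum_mul_le_of_le (h : IsReversibleChain π P) {S : Finset V} {a : ℝ} {x : V}
    (ha : ∀ y ∈ S, a ≤ P y x) : (∑ y ∈ S, π y) * a ≤ π x := by
  calc (∑ y ∈ S, π y) * a = ∑ y ∈ S, π y * a := sum_mul ..
    _ ≤ ∑ y ∈ S, π y * P y x := by
        gcongr with y hy
        exacts [h.nonneg y, ha y hy]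
    _ = ∑ y ∈ S, π x * P x y := sum_congr rfl fun y _ => h.balance y x
    _ ≤ ∑ y, π x * P x y := sum_le_univ_sum_of_nonneg (h.flow_nonneg x)
    _ = π x := by rw [← mul_sum, sum_row_of_mem_rowStochastic h.stochastic, mul_one]

theorem exists_apply_lt (h : IsReversibleChain π P) {a : ℝ} {x : V} (ha : π x < a) :
    ∃ y, P y x < a := by
  contrapose! ha
  simpa only [h.sum_eq_one, one_mul] using h.sum_mul_le_of_le (S := univ) fun y _ => ha y

theorem sum_sum_mul_add_mul_sq (h : IsReversibleChain π P) (f : V → ℝ) (a : ℝ) :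
    ∑ x, ∑ y, π x * P x y * (f x + a * f y) ^ 2 =
      (1 + a ^ 2) * pip π f f + 2 * a * pip π f (P *ᵥ f) := by
  have hrow (x : V) : ∑ y, P x y * (π x * f x * f x) = π x * f x * f x := by
    rw [← sum_mul, sum_row_of_mem_rowStochastic h.stochastic, one_mul]
  calc ∑ x, ∑ y, π x * P x y * (f x + a * f y) ^ 2
      = ∑ x, ∑ y, (P x y * (π x * f x * f x) + a ^ 2 * (P y x * (π y * f y * f y))
          + 2 * a * (π x * f x * (P x y * f y))) :=
        sum_congr rfl fun x _ => sum_congr rfl fun y _ => by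
          linear_combination a ^ 2 * f y ^ 2 * h.balance x y
    _ = ∑ x, ∑ y, P x y * (π x * f x * f x) + a ^ 2 * ∑ y, ∑ x, P y x * (π y * f y * f y)
          + 2 * a * ∑ x, π x * f x * ∑ y, P x y * f y := by
        simp only [sum_add_distrib, ← mul_sum]
        rw [sum_comm (f := fun x y => P y x * (π y * f y * f y))]
    _ = (1 + a ^ 2) * pip π f f + 2 * a * pip π f (P *ᵥ f) := by
        simp only [hrow, pip, mulVec, dotProduct]
        ring

theorem dirichletForm_eq (h : IsReversibleChain π P) (f : V → ℝ) :
    dirichletForm π P f = (∑ x, ∑ y, π x * P x y * (f x - f y) ^ 2) / 2 := by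
  have := h.sum_sum_mul_add_mul_sq f (-1)
  simp only [neg_one_mul, ← sub_eq_add_neg] at this
  rw [this, dirichletForm]
  ring

theorem dirichletForm_nonneg (h : IsReversibleChain π P) (f : V → ℝ) :
    0 ≤ dirichletForm π P f := by
  rw [h.dirichletForm_eq]
  exact div_nonneg (sum_nonneg fun x _ => sum_nonneg fun y _ =>
    mul_nonneg (h.flow_nonneg x y) (sq_nonneg _)) zero_le_two

theorem pip_mulVec_self_le (h : IsReversibleChain π P) (f : V → ℝ) :
    pip π f (P *ᵥ f) ≤ pip π f f :=
  sub_nonneg.1 (h.dirichletForm_nonneg f)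

theorem pip_mulVec_self_nonneg (h : IsReversibleChain π P) (hlazy : ∀ x, 1 / 2 ≤ P x x)
    (f : V → ℝ) : 0 ≤ pip π f (P *ᵥ f) := by
  have hdiag : 2 * pip π f f ≤ ∑ x, ∑ y, π x * P x y * (f x + 1 * f y) ^ 2 := by
    rw [pip, mul_sum]
    refine sum_le_sum fun x _ => le_trans ?_ (single_le_sum (fun y _ =>
      mul_nonneg (h.flow_nonneg x y) (sq_nonneg _)) (mem_univ x))
    calc 2 * (π x * f x * f x) = π x * (1 / 2) * (f x + 1 * f x) ^ 2 := by ring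
      _ ≤ π x * P x x * (f x + 1 * f x) ^ 2 := by
        gcongr
        · exact h.nonneg x
        · exact hlazy x
  linarith [h.sum_sum_mul_add_mul_sq f 1]

theorem pip_mulVec_self_le_secondEig (h : IsReversibleChain π P) (hnorm : pip π f f = 1)
    (hmean : ∑ x, π x * f x = 0) : pip π f (P *ᵥ f) ≤ secondEig π P := by
  refine le_csSup ⟨1, ?_⟩ ⟨f, hnorm, hmean, rfl⟩
  rintro r ⟨g, hg, -, rfl⟩
  exact (h.pip_mulVec_self_le g).trans_eq hg

theorem secondEig_le_one (h : IsReversibleChain π P) : secondEig π P ≤ 1 := by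
  refine Real.sSup_le ?_ zero_le_one
  rintro r ⟨g, hg, -, rfl⟩
  exact (h.pip_mulVec_self_le g).trans_eq hg

theorem one_sub_secondEig_mul_pip_le (h : IsReversibleChain π P) (hmean : ∑ x, π x * f x = 0) :
    (1 - secondEig π P) * pip π f f ≤ dirichletForm π P f := by
  rcases (pip_self_nonneg h.nonneg f).eq_or_lt with hzero | hpos
  · rw [← hzero, mul_zero]
    exact h.dirichletForm_nonneg f
  set c := (√(pip π f f))⁻¹
  have hc : c ^ 2 = (pip π f f)⁻¹ := by rw [inv_pow, Real.sq_sqrt hpos.le]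
  have hnorm : pip π (c • f) (c • f) = 1 := by
    rw [pip_smul_smul, hc, inv_mul_cancel₀ hpos.ne']
  have hmean' : ∑ x, π x * (c • f) x = 0 := by
    simp only [Pi.smul_apply, smul_eq_mul, mul_left_comm _ c, ← mul_sum, hmean, mul_zero]
  have hquot := h.pip_mulVec_self_le_secondEig hnorm hmean'
  rw [mulVec_smul, pip_smul_smul, hc, inv_mul_le_iff₀ hpos] at hquot
  rw [dirichletForm]
  linarith

theorem pip_pow_mulVec_pow_mulVec (h : IsReversibleChain π P) (f : V → ℝ) (i j : ℕ) :
    pip π (P ^ i *ᵥ f) (P ^ j *ᵥ f) = autocov π P f (i + j) := by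
  rw [← (h.pow i).balance.pip_mulVec_comm, mulVec_mulVec, ← pow_add, autocov]

theorem autocov_nonneg (h : IsReversibleChain π P) (hlazy : ∀ x, 1 / 2 ≤ P x x) (f : V → ℝ)
    (k : ℕ) : 0 ≤ autocov π P f k := by
  obtain ⟨s, rfl | rfl⟩ := k.even_or_odd'
  · rw [two_mul, ← h.pip_pow_mulVec_pow_mulVec]
    exact pip_self_nonneg h.nonneg _
  · rw [two_mul, add_assoc, ← h.pip_pow_mulVec_pow_mulVec, pow_succ', ← mulVec_mulVec]
    exact h.pip_mulVec_self_nonneg hlazy _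

theorem autocov_sub_mulVec (h : IsReversibleChain π P) (f : V → ℝ) (k : ℕ) :
    autocov π P (f - P *ᵥ f) k =
      (autocov π P f k - autocov π P f (k + 1)) -
        (autocov π P f (k + 1) - autocov π P f (k + 1 + 1)) := by
  have hshift (i : ℕ) : pip π (P *ᵥ f) (P ^ i *ᵥ f) = autocov π P f (i + 1) := by
    simpa only [pow_one, add_comm 1 i] using h.pip_pow_mulVec_pow_mulVec f 1 i
  rw [autocov, mulVec_sub, mulVec_mulVec, ← pow_succ, pip_sub_left, pip_sub_right, pip_sub_right,
    hshift, hshift]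
  rfl

theorem antitone_autocov_sub_autocov_succ (h : IsReversibleChain π P)
    (hlazy : ∀ x, 1 / 2 ≤ P x x) (f : V → ℝ) :
    Antitone fun k => autocov π P f k - autocov π P f (k + 1) :=
  antitone_nat_of_succ_le fun k => by
    have := h.autocov_nonneg hlazy (f - P *ᵥ f) k
    rw [h.autocov_sub_mulVec] at this
    exact sub_nonneg.1 this

theorem dirichletForm_pow_mulVec (h : IsReversibleChain π P) (f : V → ℝ) (k : ℕ) :
    dirichletForm π P (P ^ k *ᵥ f) = autocov π P f (k + k) - autocov π P f (k + k + 1) := by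
  rw [dirichletForm, mulVec_mulVec, ← pow_succ', h.pip_pow_mulVec_pow_mulVec,
    h.pip_pow_mulVec_pow_mulVec, add_assoc]

theorem dirichletForm_pow_mulVec_le (h : IsReversibleChain π P) (hlazy : ∀ x, 1 / 2 ≤ P x x)
    (f : V → ℝ) {k m : ℕ} (hkm : k ≤ m + m) :
    dirichletForm π P (P ^ m *ᵥ f) ≤ autocov π P f k - autocov π P f (k + 1) := by
  rw [h.dirichletForm_pow_mulVec]
  exact h.antitone_autocov_sub_autocov_succ hlazy f hkm

theorem antitone_autocov (h : IsReversibleChain π P) (hlazy : ∀ x, 1 / 2 ≤ P x x) (f : V → ℝ) :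
    Antitone (autocov π P f) :=
  antitone_nat_of_succ_le fun k => sub_nonneg.1 <|
    (h.dirichletForm_nonneg _).trans (h.dirichletForm_pow_mulVec_le hlazy f (Nat.le_add_left k k))

theorem one_sub_secondEig_mul_autocov_succ_le (h : IsReversibleChain π P)
    (hlazy : ∀ x, 1 / 2 ≤ P x x) (hmean : ∑ x, π x * f x = 0) (k : ℕ) :
    (1 - secondEig π P) * autocov π P f (k + 1) ≤ autocov π P f k - autocov π P f (k + 1) := by
  obtain ⟨m, hkm, hmk⟩ : ∃ m, k ≤ m + m ∧ m + m ≤ k + 1 := ⟨(k + 1) / 2, by lia, by lia⟩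
  have hmean' : ∑ x, π x * (P ^ m *ᵥ f) x = 0 := by rw [(h.pow m).sum_mul_mulVec, hmean]
  calc (1 - secondEig π P) * autocov π P f (k + 1)
      ≤ (1 - secondEig π P) * autocov π P f (m + m) :=
        mul_le_mul_of_nonneg_left (h.antitone_autocov hlazy f hmk) (sub_nonneg.2 h.secondEig_le_one)
    _ = (1 - secondEig π P) * pip π (P ^ m *ᵥ f) (P ^ m *ᵥ f) := by
        rw [h.pip_pow_mulVec_pow_mulVec]
    _ ≤ dirichletForm π P (P ^ m *ᵥ f) := h.one_sub_secondEig_mul_pip_le hmean'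
    _ ≤ autocov π P f k - autocov π P f (k + 1) := h.dirichletForm_pow_mulVec_le hlazy f hkm

theorem autocov_le_trelT_add_one_mul (h : IsReversibleChain π P) (hlazy : ∀ x, 1 / 2 ≤ P x x)
    (hgap : secondEig π P < 1) (hmean : ∑ x, π x * f x = 0) (k : ℕ) :
    autocov π P f k ≤ (trelT π P + 1) * (autocov π P f k - autocov π P f (k + 1)) := by
  have := h.one_sub_secondEig_mul_autocov_succ_le hlazy hmean k
  rw [← le_div_iff₀' (sub_pos.2 hgap), div_eq_inv_mul, ← one_div, ← trelT] at this
  linarith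

variable (x : V)

theorem sum_mul_pointDeviation (h : IsReversibleChain π P) :
    ∑ y, π y * pointDeviation π x y = 0 := by
  simp only [pointDeviation, Pi.sub_apply, mul_sub, sum_sub_distrib, ← sum_mul, h.sum_eq_one,
    Pi.single_apply, mul_ite, mul_one, mul_zero, sum_ite_eq', mem_univ, if_true, one_mul, sub_self]

theorem mulVec_pointDeviation (h : IsReversibleChain π P) :
    P *ᵥ pointDeviation π x = fun y => P y x - π x := by
  have hconst : (fun _ : V => π x) = π x • (1 : V → ℝ) := by
    ext; simp
  rw [pointDeviation, mulVec_sub, mulVec_single_one, hconst, mulVec_smul,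
    one_vecMul_of_mem_rowStochastic h.stochastic, ← hconst]
  rfl

theorem autocov_pointDeviation (h : IsReversibleChain π P) (k : ℕ) :
    autocov π P (pointDeviation π x) k = π x * ((P ^ k) x x - π x) := by
  have hmean : ∑ y, π y * ((P ^ k) y x - π x) = 0 := by
    simpa only [(h.pow k).mulVec_pointDeviation, h.sum_mul_pointDeviation] using
      (h.pow k).sum_mul_mulVec (pointDeviation π x)
  rw [autocov, (h.pow k).mulVec_pointDeviation, pip_pointDeviation, hmean, mul_zero, sub_zero]

theorem le_pow_apply_self (h : IsReversibleChain π P) (hlazy : ∀ x, 1 / 2 ≤ P x x)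
    (hx : 0 < π x) (k : ℕ) : π x ≤ (P ^ k) x x := by
  have := h.autocov_nonneg hlazy (pointDeviation π x) k
  rw [h.autocov_pointDeviation] at this
  exact sub_nonneg.1 (nonneg_of_mul_nonneg_right this hx)

theorem dirichletForm_pow_apply_le (h : IsReversibleChain π P) (hlazy : ∀ x, 1 / 2 ≤ P x x)
    (k : ℕ) :
    dirichletForm π P (fun y => (P ^ k) y x - π x) ≤ π x * ((P ^ k) x x - (P ^ (k + 1)) x x) := by
  have := h.dirichletForm_pow_mulVec_le hlazy (pointDeviation π x) (Nat.le_add_left k k)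
  rw [(h.pow k).mulVec_pointDeviation, h.autocov_pointDeviation, h.autocov_pointDeviation] at this
  linarith

theorem pow_apply_self_sub_le (h : IsReversibleChain π P) (hlazy : ∀ x, 1 / 2 ≤ P x x)
    (hgap : secondEig π P < 1) (hx : 0 < π x) (k : ℕ) :
    (P ^ k) x x - π x ≤ (trelT π P + 1) * ((P ^ k) x x - (P ^ (k + 1)) x x) := by
  have := h.autocov_le_trelT_add_one_mul hlazy hgap (h.sum_mul_pointDeviation x) k
  rw [h.autocov_pointDeviation, h.autocov_pointDeviation, ← mul_sub, mul_left_comm,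
    sub_sub_sub_cancel_right] at this
  exact le_of_mul_le_mul_left this hx

end IsReversibleChain

end ReversibleChain

section EdgeEnergy

/-- The absolute gradient of `f` along an edge, as a function on unordered pairs. -/
def edgeDiff (f : V → ℝ) : Sym2 V → ℝ :=
  Sym2.lift ⟨fun u v => |f u - f v|, fun _ _ => abs_sub_comm _ _⟩

theorem edgeDiff_mk (f : V → ℝ) (u v : V) : edgeDiff f s(u, v) = |f u - f v| := rfl

variable {G : SimpleGraph V} {f : V → ℝ} {u v : V}

theorem abs_sub_le_sum_map_edgeDiff (f : V → ℝ) (p : G.Walk u v) :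
    |f u - f v| ≤ (p.edges.map (edgeDiff f)).sum := by
  induction p with
  | nil => simp
  | cons h p ih =>
    rw [SimpleGraph.Walk.edges_cons, List.map_cons, List.sum_cons]
    exact (abs_sub_le _ _ _).trans (add_le_add le_rfl ih)

variable [Fintype V] [DecidableRel G.Adj]

/-- The Dirichlet energy of `f` on the graph `G`, every edge having unit conductance. -/
def edgeEnergy (G : SimpleGraph V) [DecidableRel G.Adj] (f : V → ℝ) : ℝ :=
  ∑ e ∈ G.edgeFinset, edgeDiff f e ^ 2

theorem edgeEnergy_nonneg (G : SimpleGraph V) [DecidableRel G.Adj] (f : V → ℝ) :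
    0 ≤ edgeEnergy G f :=
  sum_nonneg fun _ _ => sq_nonneg _

theorem sq_sub_le_length_mul_edgeEnergy {p : G.Walk u v} (hp : p.IsTrail) :
    (f u - f v) ^ 2 ≤ p.length * edgeEnergy G f := by
  classical
  have hcard : #p.edges.toFinset = p.length := by
    rw [List.toFinset_card_of_nodup hp.edges_nodup, p.length_edges]
  calc (f u - f v) ^ 2 = |f u - f v| ^ 2 := (sq_abs _).symm
    _ ≤ (∑ e ∈ p.edges.toFinset, edgeDiff f e) ^ 2 := by
        rw [List.sum_toFinset _ hp.edges_nodup]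
        gcongr
        exact abs_sub_le_sum_map_edgeDiff f p
    _ ≤ p.length * ∑ e ∈ p.edges.toFinset, edgeDiff f e ^ 2 := by
        rw [← hcard]
        exact sq_sum_le_card_mul_sum_sq
    _ ≤ p.length * edgeEnergy G f := by
        gcongr
        refine sum_le_sum_of_subset_of_nonneg (fun e he => ?_) fun _ _ _ => sq_nonneg _
        exact SimpleGraph.mem_edgeFinset.2 (p.edges_subset_edgeSet (List.mem_toFinset.1 he))

theorem sq_sub_le_card_edgeFinset_mul_edgeEnergy (hconn : G.Connected) (f : V → ℝ) (u v : V) :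
    (f u - f v) ^ 2 ≤ #G.edgeFinset * edgeEnergy G f := by
  obtain ⟨p, hp, -⟩ := hconn.exists_path_of_dist u v
  refine (sq_sub_le_length_mul_edgeEnergy hp.isTrail).trans ?_
  gcongr
  · exact edgeEnergy_nonneg G f
  · exact hp.isTrail.length_le_card_edgeFinset

theorem sum_neighborFinset_sq_sub_le_edgeEnergy (f : V → ℝ) (x : V) :
    ∑ z ∈ G.neighborFinset x, (f x - f z) ^ 2 ≤ edgeEnergy G f := by
  classical
  calc ∑ z ∈ G.neighborFinset x, (f x - f z) ^ 2
      = ∑ z ∈ G.neighborFinset x, edgeDiff f s(x, z) ^ 2 := by simp only [edgeDiff_mk, sq_abs]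
    _ = ∑ e ∈ (G.neighborFinset x).image fun z => s(x, z), edgeDiff f e ^ 2 :=
        (sum_image (f := fun e => edgeDiff f e ^ 2) fun _ _ _ _ => Sym2.congr_right.1).symm
    _ ≤ edgeEnergy G f := by
        refine sum_le_sum_of_subset_of_nonneg ?_ fun _ _ _ => sq_nonneg _
        simp only [image_subset_iff, SimpleGraph.mem_neighborFinset, SimpleGraph.mem_edgeFinset,
          SimpleGraph.mem_edgeSet, imp_self, implies_true]

theorem sum_sum_neighborFinset_sq_sub (f : V → ℝ) :
    ∑ x, ∑ y ∈ G.neighborFinset x, (f x - f y) ^ 2 = 2 * edgeEnergy G f := by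
  classical
  calc ∑ x, ∑ y ∈ G.neighborFinset x, (f x - f y) ^ 2
      = ∑ d : G.Dart, edgeDiff f d.edge ^ 2 := by
        rw [sum_sigma']
        exact sum_bij' (fun p hp => ⟨(p.1, p.2), (G.mem_neighborFinset _ _).1 (mem_sigma.1 hp).2⟩)
          (fun d _ => ⟨d.fst, d.snd⟩) (fun _ _ => mem_univ _) (fun d _ => by simp)
          (fun _ _ => rfl) (fun _ _ => rfl) fun p _ => (sq_abs _).symm
    _ = ∑ e ∈ G.edgeFinset, ∑ d : G.Dart with d.edge = e, edgeDiff f d.edge ^ 2 :=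
        (sum_fiberwise_of_maps_to (fun d _ => SimpleGraph.mem_edgeFinset.2 d.edge_mem) _).symm
    _ = ∑ e ∈ G.edgeFinset, 2 * edgeDiff f e ^ 2 := by
        refine sum_congr rfl fun e he => ?_
        rw [sum_congr rfl fun d hd => by rw [(mem_filter.1 hd).2], sum_const,
          G.dart_edge_fiber_card e (SimpleGraph.mem_edgeFinset.1 he), two_nsmul, two_mul]
    _ = 2 * edgeEnergy G f := (mul_sum ..).symm

end EdgeEnergy

section Geometry

variable {G : SimpleGraph V} {f : V → ℝ} {S : Finset V} {x w : V} {a : ℝ}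

theorem dist_getVert_eq {p : G.Walk x w} (hp : p.length = G.dist x w) {j : ℕ}
    (hj : j ≤ p.length) : G.dist x (p.getVert j) = j := by
  rw [← SimpleGraph.length_eq_dist_of_subwalk hp (p.isSubwalk_take j),
    SimpleGraph.Walk.take_length, min_eq_left hj]

variable [DecidableRel G.Adj]

theorem card_filter_adj_getVert_le_three {p : G.Walk x w} (hp : p.length = G.dist x w) (z : V) :
    #{j ∈ range p.length | G.Adj (p.getVert j) z} ≤ 3 := by
  have hsub : {j ∈ range p.length | G.Adj (p.getVert j) z} ⊆
      Icc (G.dist x z - 1) (G.dist x z + 1) := fun j hj => by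
    obtain ⟨hj, hadj⟩ := mem_filter.1 hj
    have hdist := dist_getVert_eq hp (mem_range.1 hj).le
    have := hadj.diff_dist_adj (u := x)
    rw [mem_Icc]
    lia
  refine (card_le_card hsub).trans ?_
  rw [Nat.card_Icc]
  lia

variable [Fintype V]

theorem dist_sub_one_mul_minDegree_le (hconn : G.Connected)
    (hS : ∀ z, G.dist x z < G.dist x w → z ∈ S) :
    (G.dist x w - 1) * G.minDegree ≤ 3 * #S := by
  obtain ⟨p, -, hp⟩ := hconn.exists_path_of_dist x w
  have hbelow (j : ℕ) (hj : j ∈ range (G.dist x w - 1)) :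
      G.minDegree ≤ #{z ∈ S | G.Adj (p.getVert j) z} := by
    refine (G.minDegree_le_degree (p.getVert j)).trans (card_le_card fun z hz => ?_)
    have hadj := (SimpleGraph.mem_neighborFinset _ _ _).1 hz
    have hj : j < G.dist x w - 1 := mem_range.1 hj
    have hdist := dist_getVert_eq hp (j := j) (by lia)
    have := hadj.diff_dist_adj (u := x)
    exact mem_filter.2 ⟨hS z (by lia), hadj⟩
  have habove (z : V) (_ : z ∈ S) :
      #{j ∈ range (G.dist x w - 1) | G.Adj (p.getVert j) z} ≤ 3 := by
    refine (card_le_card (filter_subset_filter _ (range_subset_range.2 ?_))).trans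
      (card_filter_adj_getVert_le_three hp z)
    lia
  have := card_mul_le_card_mul (fun j z => G.Adj (p.getVert j) z) hbelow habove
  simpa only [card_range, mul_comm #S] using this

theorem sq_sub_mul_degree_le_of_adj (hx : x ∈ S) (hw : w ∉ S) (hadj : G.Adj x w)
    (ha : a ≤ f x) (hf : ∀ y ∉ S, f y ≤ a) :
    (f x - a) ^ 2 * G.degree x ≤ #S * edgeEnergy G f := by
  classical
  set m := #(G.neighborFinset x \ S)
  have hm : 0 < m := card_pos.2 ⟨w, by simpa using ⟨hadj, hw⟩⟩
  have hinter : #(G.neighborFinset x ∩ S) + 1 ≤ #S :=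
    card_lt_card (ssubset_iff.2 ⟨x, by simp, insert_subset hx inter_subset_right⟩)
  have hsplit : #(G.neighborFinset x ∩ S) + m = G.degree x := card_inter_add_card_sdiff ..
  have hdegree : G.degree x ≤ m * #S := by nlinarith
  have henergy : m * (f x - a) ^ 2 ≤ edgeEnergy G f := by
    calc m * (f x - a) ^ 2 = ∑ z ∈ G.neighborFinset x \ S, (f x - a) ^ 2 := by
          rw [sum_const, nsmul_eq_mul]
      _ ≤ ∑ z ∈ G.neighborFinset x \ S, (f x - f z) ^ 2 := by
          gcongr with z hz
          exact hf z (mem_sdiff.1 hz).2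
      _ ≤ ∑ z ∈ G.neighborFinset x, (f x - f z) ^ 2 :=
          sum_le_sum_of_subset_of_nonneg sdiff_subset fun _ _ _ => sq_nonneg _
      _ ≤ edgeEnergy G f := sum_neighborFinset_sq_sub_le_edgeEnergy f x
  calc (f x - a) ^ 2 * G.degree x ≤ (f x - a) ^ 2 * (m * #S) := by gcongr; exact_mod_cast hdegree
    _ = #S * (m * (f x - a) ^ 2) := by ring
    _ ≤ #S * edgeEnergy G f := by gcongr

theorem sq_sub_mul_minDegree_le_of_two_le_dist (hconn : G.Connected) (hdist : 2 ≤ G.dist x w)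
    (hS : ∀ z, G.dist x z < G.dist x w → z ∈ S) :
    (f x - f w) ^ 2 * G.minDegree ≤ 6 * #S * edgeEnergy G f := by
  obtain ⟨p, hp, hlength⟩ := hconn.exists_path_of_dist x w
  have hball : G.dist x w * G.minDegree ≤ 6 * #S := by
    calc G.dist x w * G.minDegree ≤ 2 * (G.dist x w - 1) * G.minDegree := by gcongr; lia
      _ = 2 * ((G.dist x w - 1) * G.minDegree) := mul_assoc ..
      _ ≤ 2 * (3 * #S) := Nat.mul_le_mul_left 2 (dist_sub_one_mul_minDegree_le hconn hS)
      _ = 6 * #S := by ring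
  calc (f x - f w) ^ 2 * G.minDegree ≤ G.dist x w * edgeEnergy G f * G.minDegree := by
        rw [← hlength]
        gcongr
        exact sq_sub_le_length_mul_edgeEnergy hp.isTrail
    _ = (G.dist x w * G.minDegree : ℕ) * edgeEnergy G f := by push_cast; ring
    _ ≤ (6 * #S : ℕ) * edgeEnergy G f := by
        gcongr
        exact edgeEnergy_nonneg G f
    _ = 6 * #S * edgeEnergy G f := by push_cast; ring

theorem sq_sub_mul_minDegree_le (hconn : G.Connected) (hx : x ∈ S) (hS : ∃ w, w ∉ S)
    (ha : a ≤ f x) (hf : ∀ y ∉ S, f y ≤ a) :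
    (f x - a) ^ 2 * G.minDegree ≤ 6 * #S * edgeEnergy G f := by
  classical
  obtain ⟨w, hw, hmin⟩ := exists_min_image Sᶜ (G.dist x) (hS.imp fun _ => mem_compl.2)
  have hw : w ∉ S := mem_compl.1 hw
  have hnear (z : V) (hz : G.dist x z < G.dist x w) : z ∈ S := by
    contrapose! hz
    exact hmin z (mem_compl.2 hz)
  obtain hdist | hdist : G.dist x w = 1 ∨ 2 ≤ G.dist x w := by
    have := hconn.pos_dist_of_ne (ne_of_mem_of_not_mem hx hw)
    lia
  · calc (f x - a) ^ 2 * G.minDegree ≤ (f x - a) ^ 2 * G.degree x := by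
          gcongr
          exact G.minDegree_le_degree x
      _ ≤ #S * edgeEnergy G f :=
          sq_sub_mul_degree_le_of_adj hx hw (SimpleGraph.dist_eq_one_iff_adj.1 hdist) ha hf
      _ ≤ 6 * #S * edgeEnergy G f := by
          gcongr
          · exact edgeEnergy_nonneg G f
          · exact le_mul_of_one_le_left (#S).cast_nonneg (by norm_num)
  · calc (f x - a) ^ 2 * G.minDegree ≤ (f x - f w) ^ 2 * G.minDegree := by
          gcongr
          exact hf w hw
      _ ≤ 6 * #S * edgeEnergy G f :=
          sq_sub_mul_minDegree_le_of_two_le_dist hconn hdist hnear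

theorem pow_three_mul_minDegree_sq_le (hconn : G.Connected) (hpos : 0 < f x)
    (hw : ∃ w, f w ≤ f x / 2) (hmass : #{y | f x / 2 < f y} * G.minDegree * (f x / 2) ≤ a) :
    f x ^ 3 * (G.minDegree : ℝ) ^ 2 ≤ 48 * a * edgeEnergy G f := by
  set S : Finset V := {y | f x / 2 < f y}
  have hmem (y : V) : y ∈ S ↔ f x / 2 < f y := mem_filter_univ y
  have hdrop : (f x - f x / 2) ^ 2 * G.minDegree ≤ 6 * #S * edgeEnergy G f :=
    sq_sub_mul_minDegree_le hconn ((hmem x).2 (half_lt_self hpos))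
      (hw.imp fun w hw => (hmem w).not.2 hw.not_gt) (half_le_self hpos.le)
      fun y hy => not_lt.1 ((hmem y).not.1 hy)
  calc f x ^ 3 * (G.minDegree : ℝ) ^ 2
      = 8 * G.minDegree * (f x / 2) * ((f x - f x / 2) ^ 2 * G.minDegree) := by ring
    _ ≤ 8 * G.minDegree * (f x / 2) * (6 * #S * edgeEnergy G f) := by gcongr
    _ = 48 * (#S * G.minDegree * (f x / 2)) * edgeEnergy G f := by ring
    _ ≤ 48 * a * edgeEnergy G f := by
        gcongr
        exact edgeEnergy_nonneg G f

end Geometry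

section LazyWalk

variable [Fintype V] {G : SimpleGraph V} [DecidableRel G.Adj]

theorem sum_degree_pos [Nonempty V] (hdeg : ∀ v, 0 < G.degree v) :
    0 < ∑ v, (G.degree v : ℝ) :=
  sum_pos (fun v _ => Nat.cast_pos.2 (hdeg v)) univ_nonempty

variable [DecidableEq V] {x y : V}

theorem dminR_eq_minDegree [Nonempty V] (G : SimpleGraph V) [DecidableRel G.Adj] :
    dminR G = G.minDegree := by
  obtain ⟨v, hv⟩ := G.exists_minimal_degree_vertex
  refine le_antisymm ?_ (le_inf' _ _ fun u _ => Nat.cast_le.2 (G.minDegree_le_degree u))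
  rw [hv]
  exact inf'_le _ (mem_univ v)

theorem lazyP_self (G : SimpleGraph V) [DecidableRel G.Adj] (x : V) : lazyP G x x = 1 / 2 := by
  simp [lazyP]

theorem lazyP_nonneg (G : SimpleGraph V) [DecidableRel G.Adj] (x y : V) : 0 ≤ lazyP G x y := by
  rw [lazyP, of_apply]
  positivity

theorem lazyP_eq_zero (hne : x ≠ y) (hadj : ¬ G.Adj x y) : lazyP G x y = 0 := by
  rw [lazyP, of_apply, if_neg hne, if_neg hadj]

theorem sum_lazyP (hx : 0 < G.degree x) : ∑ y, lazyP G x y = 1 := by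
  have hdeg : (G.degree x : ℝ) ≠ 0 := by positivity
  have hsplit (y : V) : lazyP G x y =
      (if x = y then 1 / 2 else 0) + if G.Adj x y then 1 / (2 * (G.degree x : ℝ)) else 0 := by
    rw [lazyP, of_apply]
    split_ifs with hxy hadj <;> simp_all
  simp only [hsplit, sum_add_distrib, sum_ite_eq, mem_univ, if_true, ← sum_filter, sum_const,
    ← G.neighborFinset_eq_filter, G.card_neighborFinset_eq_degree, nsmul_eq_mul]
  field_simp
  norm_num

theorem lazyPi_mul_lazyP_of_adj (hadj : G.Adj x y) :
    lazyPi G x * lazyP G x y = (2 * ∑ v, (G.degree v : ℝ))⁻¹ := by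
  have hdeg : (G.degree x : ℝ) ≠ 0 := by
    exact_mod_cast (G.degree_pos_iff_exists_adj x).2 ⟨y, hadj⟩ |>.ne'
  rw [lazyPi, lazyP, of_apply, if_neg hadj.ne, if_pos hadj]
  field_simp

theorem detailedBalance_lazyP (G : SimpleGraph V) [DecidableRel G.Adj] :
    DetailedBalance (lazyPi G) (lazyP G) := by
  intro x y
  rcases eq_or_ne x y with rfl | hne
  · rfl
  by_cases hadj : G.Adj x y
  · rw [lazyPi_mul_lazyP_of_adj hadj, lazyPi_mul_lazyP_of_adj hadj.symm]
  · rw [lazyP_eq_zero hne hadj, lazyP_eq_zero hne.symm (mt G.adj_symm hadj), mul_zero, mul_zero]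

theorem lazyPi_pos (hdeg : ∀ v, 0 < G.degree v) (x : V) : 0 < lazyPi G x :=
  have : Nonempty V := ⟨x⟩
  div_pos (Nat.cast_pos.2 (hdeg x)) (sum_degree_pos hdeg)

theorem isReversibleChain_lazyP [Nonempty V] (hdeg : ∀ v, 0 < G.degree v) :
    IsReversibleChain (lazyPi G) (lazyP G) where
  stochastic := mem_rowStochastic_iff_sum.2 ⟨lazyP_nonneg G, fun x => sum_lazyP (hdeg x)⟩
  balance := detailedBalance_lazyP G
  nonneg x := (lazyPi_pos hdeg x).le
  sum_eq_one := by
    simp only [lazyPi, ← sum_div]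
    exact div_self (sum_degree_pos hdeg).ne'

theorem dirichletForm_lazyP [Nonempty V] (hdeg : ∀ v, 0 < G.degree v) (f : V → ℝ) :
    dirichletForm (lazyPi G) (lazyP G) f = edgeEnergy G f / (2 * ∑ v, (G.degree v : ℝ)) := by
  have hrow (x : V) : ∑ y, lazyPi G x * lazyP G x y * (f x - f y) ^ 2 =
      (2 * ∑ v, (G.degree v : ℝ))⁻¹ * ∑ y ∈ G.neighborFinset x, (f x - f y) ^ 2 := by
    rw [mul_sum, ← sum_subset (subset_univ (G.neighborFinset x)) fun y _ hy => ?_]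
    · refine sum_congr rfl fun y hy => ?_
      rw [lazyPi_mul_lazyP_of_adj ((G.mem_neighborFinset x y).1 hy)]
    · rcases eq_or_ne x y with rfl | hne
      · simp
      · rw [lazyP_eq_zero hne (mt (G.mem_neighborFinset x y).2 hy), mul_zero, zero_mul]
  rw [(isReversibleChain_lazyP hdeg).dirichletForm_eq]
  simp only [hrow]
  rw [← mul_sum, sum_sum_neighborFinset_sq_sub]
  ring

theorem secondEig_lazyP_lt_one [Nontrivial V] (hconn : G.Connected) :
    secondEig (lazyPi G) (lazyP G) < 1 := by
  have hdeg (v : V) : 0 < G.degree v := hconn.preconnected.degree_pos_of_nontrivial v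
  have hW : 0 < ∑ v, (G.degree v : ℝ) := sum_degree_pos hdeg
  have hchain := isReversibleChain_lazyP hdeg
  have hcard : ∑ v, (G.degree v : ℝ) = 2 * #G.edgeFinset := by
    exact_mod_cast G.sum_degrees_eq_twice_card_edges
  refine secondEig_lt_one_of_poincare (C := #G.edgeFinset * ∑ v, (G.degree v : ℝ)) ?_
    fun f hmean => ?_
  · exact mul_pos (by linarith) hW
  have hvar : 2 * pip (lazyPi G) f f ≤ #G.edgeFinset * edgeEnergy G f :=
    two_mul_pip_self_le_of_sq_sub_le hchain.nonneg hchain.sum_eq_one hmean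
      (sq_sub_le_card_edgeFinset_mul_edgeEnergy hconn f)
  have hcancel : (∑ v, (G.degree v : ℝ)) * dirichletForm (lazyPi G) (lazyP G) f =
      edgeEnergy G f / 2 := by
    rw [dirichletForm_lazyP hdeg]
    field_simp
  rw [mul_assoc, hcancel]
  linarith

theorem edgeEnergy_lazyP_pow_le (hdeg : ∀ v, 0 < G.degree v) (x : V) (k : ℕ) :
    edgeEnergy G (fun y => (lazyP G ^ k) y x - lazyPi G x) ≤
      2 * G.degree x * ((lazyP G ^ k) x x - (lazyP G ^ (k + 1)) x x) := by
  have : Nonempty V := ⟨x⟩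
  have hW : 0 < ∑ v, (G.degree v : ℝ) := sum_degree_pos hdeg
  have := (isReversibleChain_lazyP hdeg).dirichletForm_pow_apply_le x
    (fun v => (lazyP_self G v).ge) k
  rw [dirichletForm_lazyP hdeg, lazyPi, div_le_iff₀ (by positivity)] at this
  refine this.trans_eq ?_
  field_simp

theorem card_mul_minDegree_mul_le (hdeg : ∀ v, 0 < G.degree v) {S : Finset V} {a : ℝ} {k : ℕ}
    (ha : 0 ≤ a) (hS : ∀ y ∈ S, a ≤ (lazyP G ^ k) y x) : #S * G.minDegree * a ≤ G.degree x := by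
  have : Nonempty V := ⟨x⟩
  have hmass := ((isReversibleChain_lazyP hdeg).pow k).sum_mul_le_of_le hS
  simp only [lazyPi, ← sum_div] at hmass
  rw [div_mul_eq_mul_div, div_le_div_iff_of_pos_right (sum_degree_pos hdeg)] at hmass
  refine le_trans ?_ hmass
  gcongr
  rw [← nsmul_eq_mul]
  exact card_nsmul_le_sum _ _ _ fun v _ => Nat.cast_le.2 (G.minDegree_le_degree v)

theorem lazyP_pow_apply_self_sub_pow_three_le_edgeEnergy [Nontrivial V] (hconn : G.Connected)
    (x : V) (k : ℕ) :
    ((lazyP G ^ k) x x - lazyPi G x) ^ 3 * (G.minDegree : ℝ) ^ 2 ≤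
      48 * G.degree x * edgeEnergy G fun y => (lazyP G ^ k) y x - lazyPi G x := by
  have hdeg (v : V) : 0 < G.degree v := hconn.preconnected.degree_pos_of_nontrivial v
  have hchain := isReversibleChain_lazyP hdeg
  set q : ℝ := (lazyP G ^ k) x x - lazyPi G x
  have hnonneg : 0 ≤ q := sub_nonneg.2 <|
    hchain.le_pow_apply_self x (fun v => (lazyP_self G v).ge) (lazyPi_pos hdeg x) k
  rcases hnonneg.eq_or_lt with hzero | hpos
  · have := edgeEnergy_nonneg G fun y => (lazyP G ^ k) y x - lazyPi G x
    rw [← hzero, zero_pow three_ne_zero, zero_mul]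
    positivity
  obtain ⟨w, hw⟩ :=
    (hchain.pow k).exists_apply_lt (lt_add_of_pos_left (lazyPi G x) (half_pos hpos))
  have hlarge : ∀ y ∈ ({y | q / 2 < (lazyP G ^ k) y x - lazyPi G x} : Finset V),
      q / 2 ≤ (lazyP G ^ k) y x := fun y hy =>
    ((mem_filter_univ y).1 hy).le.trans (sub_le_self _ (lazyPi_pos hdeg x).le)
  exact pow_three_mul_minDegree_sq_le (f := fun y => (lazyP G ^ k) y x - lazyPi G x) hconn hpos
    ⟨w, (sub_lt_iff_lt_add.2 hw).le⟩ (card_mul_minDegree_mul_le hdeg (half_pos hpos).le hlarge)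

theorem lazyP_pow_apply_self_sub_pow_three_le [Nontrivial V] (hconn : G.Connected)
    (x : V) (k : ℕ) :
    ((lazyP G ^ k) x x - lazyPi G x) ^ 3 ≤
      (10 * G.degree x / G.minDegree) ^ 2 *
        ((lazyP G ^ k) x x - (lazyP G ^ (k + 1)) x x) := by
  have hδ : 0 < (G.minDegree : ℝ) :=
    Nat.cast_pos.2 hconn.preconnected.minDegree_pos_of_nontrivial
  rw [div_pow, div_mul_eq_mul_div, le_div_iff₀ (by positivity)]
  calc ((lazyP G ^ k) x x - lazyPi G x) ^ 3 * (G.minDegree : ℝ) ^ 2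
      ≤ 48 * G.degree x * edgeEnergy G fun y => (lazyP G ^ k) y x - lazyPi G x :=
        lazyP_pow_apply_self_sub_pow_three_le_edgeEnergy hconn x k
    _ ≤ 50 * G.degree x * edgeEnergy G fun y => (lazyP G ^ k) y x - lazyPi G x := by
        gcongr
        · exact edgeEnergy_nonneg G _
        · norm_num
    _ ≤ 50 * G.degree x *
          (2 * G.degree x * ((lazyP G ^ k) x x - (lazyP G ^ (k + 1)) x x)) := by
        gcongr
        exact edgeEnergy_lazyP_pow_le (fun v => hconn.preconnected.degree_pos_of_nontrivial v) x k
    _ = (10 * G.degree x) ^ 2 * ((lazyP G ^ k) x x - (lazyP G ^ (k + 1)) x x) := by ring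

end LazyWalk

theorem stmt19 [Fintype V] [Nonempty V] [DecidableEq V] (G : SimpleGraph V)
    [DecidableRel G.Adj] (hconn : G.Connected) (hcard : 2 ≤ Fintype.card V)
    (x : V) (t : ℕ) :
    ((lazyP G) ^ t) x x - lazyPi G x ≤
      10 * (G.degree x : ℝ) / dminR G *
        min (1 / Real.sqrt (t+1)) (Real.sqrt (trelT (lazyPi G) (lazyP G) + 1) / (t+1)) := by
  have : Nontrivial V := Fintype.one_lt_card_iff_nontrivial.1 hcard
  have hdeg (v : V) : 0 < G.degree v := hconn.preconnected.degree_pos_of_nontrivial v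
  have hgap := secondEig_lazyP_lt_one hconn
  have hchain := isReversibleChain_lazyP hdeg
  have hlazy (v : V) : 1 / 2 ≤ lazyP G v v := (lazyP_self G v).ge
  have hdegree : 0 < (G.degree x : ℝ) := Nat.cast_pos.2 (hdeg x)
  have hminDegree : 0 < (G.minDegree : ℝ) :=
    Nat.cast_pos.2 hconn.preconnected.minDegree_pos_of_nontrivial
  have hrelax : 0 < trelT (lazyPi G) (lazyP G) := one_div_pos.2 (sub_pos.2 hgap)
  rw [dminR_eq_minDegree]
  refine le_mul_min_of_decay (q := fun k => (lazyP G ^ k) x x - lazyPi G x)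
    (fun k => sub_nonneg.2 (hchain.le_pow_apply_self x hlazy (lazyPi_pos hdeg x) k))
    (by positivity) (by positivity) (fun k => ?_) (fun k => ?_) t
  · rw [sub_sub_sub_cancel_right]
    exact lazyP_pow_apply_self_sub_pow_three_le hconn x k
  · rw [sub_sub_sub_cancel_right]
    exact hchain.pow_apply_self_sub_le x hlazy hgap (lazyPi_pos hdeg x) k
end
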